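/- arXiv:1312.3829 — 3 statements merged into one kernel-verified Lean document; each statement's English description precedes it below -/
import Mathlib

section
/- Let P be a preordered set equipped with a superlinear family (Ω_ε) and let D be any category. Then the interleaving distance d^Ω is an extended pseudometric on functors P ⥤ D: for all F, G, H : P ⥤ D one has d^Ω(F,F) = 0, d^Ω(F,G) = d^Ω(G,F), and d^Ω(F,H) ≤ d^Ω(F,G) + d^Ω(G,H). -/
/-!
The constant interleaving `F(x) → F(Ω₀ x)` gives `d(F, F) = 0`, and exchanging the two
transformations of an interleaving gives symmetry. For the triangle inequality, an
`(Ω_ε, Ω_ε)`-interleaving of `F, G` and an `(Ω_δ, Ω_δ)`-interleaving of `G, H` compose to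
`F(x) → G(Ω_ε x) → H(Ω_δ Ω_ε x) → H(Ω_{ε+δ} x)`, where the last map exists by superlinearity
(`Interleaving.trans`); naturality reduces the triangle identities of the composite to those of
the two factors (`Interleaving.transHom_tri`). Passing to infima finishes the proof.
-/


open CategoryTheory
open scoped NNReal ENNReal

universe v₁ u₁ v₂ u₂

/-- A translation on a preordered set `P`. -/
structure Translation (P : Type*) [Preorder P] where
  toFun : P → P
  mono : Monotone toFun
  le_apply : ∀ x, x ≤ toFun x

namespace Translation

variable {P : Type*} [Preorder P]

/-- The identity translation. -/
def id (P : Type*) [Preorder P] : Translation P :=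
  ⟨fun x => x, monotone_id, fun _ => le_refl _⟩

/-- Composition of translations. -/
def comp (Γ₁ Γ₂ : Translation P) : Translation P :=
  ⟨Γ₁.toFun ∘ Γ₂.toFun, Γ₁.mono.comp Γ₂.mono,
    fun x => (Γ₂.le_apply x).trans (Γ₁.le_apply _)⟩

instance : Preorder (Translation P) where
  le Γ K := ∀ x, Γ.toFun x ≤ K.toFun x
  le_refl Γ x := le_refl _
  le_trans Γ K L h₁ h₂ x := (h₁ x).trans (h₂ x)

/-- A translation, regarded as an endofunctor of `P` viewed as a thin category. -/
def functor (Γ : Translation P) : P ⥤ P := Γ.mono.functor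

end Translation

variable {P : Type*} [Preorder P] {D : Type u₁} [Category.{v₁} D]

/-- A `(Γ,K)`-interleaving between functors `F G : P ⥤ D`. -/
structure Interleaving (Γ K : Translation P) (F G : P ⥤ D) where
  φ : F ⟶ Γ.functor ⋙ G
  ψ : G ⟶ K.functor ⋙ F
  tri₁ : ∀ x : P, φ.app x ≫ ψ.app (Γ.toFun x) =
    F.map (homOfLE ((Γ.le_apply x).trans (K.le_apply _)))
  tri₂ : ∀ x : P, ψ.app x ≫ φ.app (K.toFun x) =
    G.map (homOfLE ((K.le_apply x).trans (Γ.le_apply _)))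

/-- `F` and `G` are `(Γ,K)`-interleaved if a `(Γ,K)`-interleaving exists. -/
def Interleaved (Γ K : Translation P) (F G : P ⥤ D) : Prop :=
  Nonempty (Interleaving Γ K F G)

/-- The interleaving distance associated to a superlinear family `Ω`. -/
noncomputable def dSuper (Ω : ℝ≥0 → Translation P) (F G : P ⥤ D) : ℝ≥0∞ :=
  sInf ((fun ε : ℝ≥0 => (ε : ℝ≥0∞)) ''
    {ε : ℝ≥0 | Interleaved (Ω ε) (Ω ε) F G})


namespace Interleaving

variable {Γ K Γ₁ K₁ Γ₂ K₂ : Translation P} {F G H : P ⥤ D}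

/-- The structure maps of a persistence module compose. -/
lemma map_map (F : P ⥤ D) {x y z : P} (h : x ≤ y) (h' : y ≤ z) :
    F.map (homOfLE h) ≫ F.map (homOfLE h') = F.map (homOfLE (h.trans h')) :=
  (F.map_comp _ _).symm

/-- The component at `x` of the first transformation. Its codomain is written `G.obj (Γ.toFun x)`
in place of the definitionally equal `(Γ.functor ⋙ G).obj x`, so that it composes syntactically
with other maps between values of `F` and `G`. -/
def hom (I : Interleaving Γ K F G) (x : P) : F.obj x ⟶ G.obj (Γ.toFun x) :=
  I.φ.app x

lemma hom_nat (I : Interleaving Γ K F G) {x y : P} (h : x ≤ y) :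
    F.map (homOfLE h) ≫ I.hom y = I.hom x ≫ G.map (homOfLE (Γ.mono h)) :=
  I.φ.naturality (homOfLE h)

/-- The interleaving with the roles of the two functors exchanged. -/
def symm (I : Interleaving Γ K F G) : Interleaving K Γ G F :=
  ⟨I.ψ, I.φ, I.tri₂, I.tri₁⟩

lemma hom_symm_hom (I : Interleaving Γ K F G) (x : P) :
    I.hom x ≫ I.symm.hom (Γ.toFun x) =
      F.map (homOfLE ((Γ.le_apply x).trans (K.le_apply _))) :=
  I.tri₁ x

/-- The natural transformation formed by the structure maps `F(x) → F(Γ x)`. -/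
def shift (Γ : Translation P) (F : P ⥤ D) : F ⟶ Γ.functor ⋙ F where
  app x := F.map (homOfLE (Γ.le_apply x))
  naturality _ y f :=
    (map_map F (leOfHom f) (Γ.le_apply y)).trans
      (map_map F (Γ.le_apply _) (Γ.mono (leOfHom f))).symm

/-- The interleaving of `F` with itself given by the structure maps. -/
def refl (Γ : Translation P) (F : P ⥤ D) : Interleaving Γ Γ F F where
  φ := shift Γ F
  ψ := shift Γ F
  tri₁ x := map_map F (Γ.le_apply x) (Γ.le_apply _)
  tri₂ x := map_map F (Γ.le_apply x) (Γ.le_apply _)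

/-- The composite `F(x) → G(Γ₁ x) → H(Γ₂ Γ₁ x) → H(Γ x)`. -/
def transHom (I : Interleaving Γ₁ K₁ F G) (J : Interleaving Γ₂ K₂ G H)
    (hΓ : ∀ x, Γ₂.toFun (Γ₁.toFun x) ≤ Γ.toFun x) (x : P) : F.obj x ⟶ H.obj (Γ.toFun x) :=
  I.hom x ≫ J.hom (Γ₁.toFun x) ≫ H.map (homOfLE (hΓ x))

lemma transHom_nat (I : Interleaving Γ₁ K₁ F G) (J : Interleaving Γ₂ K₂ G H)
    (hΓ : ∀ x, Γ₂.toFun (Γ₁.toFun x) ≤ Γ.toFun x) {x y : P} (h : x ≤ y) :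
    F.map (homOfLE h) ≫ transHom I J hΓ y =
      transHom I J hΓ x ≫ H.map (homOfLE (Γ.mono h)) := by
  simp only [transHom, Category.assoc, map_map]
  rw [← Category.assoc, I.hom_nat h, Category.assoc, ← Category.assoc (G.map _),
    J.hom_nat, Category.assoc, map_map]

/-- One triangle identity for a composite interleaving; the other is obtained by exchanging the
roles of `F` and `H`. -/
lemma transHom_tri (I : Interleaving Γ₁ K₁ F G) (J : Interleaving Γ₂ K₂ G H)
    (hΓ : ∀ x, Γ₂.toFun (Γ₁.toFun x) ≤ Γ.toFun x)
    (hK : ∀ x, K₁.toFun (K₂.toFun x) ≤ K.toFun x) (x : P) :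
    transHom I J hΓ x ≫ transHom J.symm I.symm hK (Γ.toFun x) =
      F.map (homOfLE ((Γ.le_apply x).trans (K.le_apply _))) := by
  have hy : Γ₁.toFun x ≤ K₂.toFun (Γ.toFun x) :=
    ((Γ₂.le_apply _).trans (hΓ x)).trans (K₂.le_apply _)
  -- The inner part `G → H → G` collapses to a structure map of `G`.
  have inner : J.hom (Γ₁.toFun x) ≫ H.map (homOfLE (hΓ x)) ≫ J.symm.hom (Γ.toFun x) =
      G.map (homOfLE hy) := by
    rw [J.symm.hom_nat, ← Category.assoc, J.hom_symm_hom, map_map]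
  -- That structure map slides past `G → F`, leaving the triangle identity of `I`.
  have outer : I.hom x ≫ G.map (homOfLE hy) ≫ I.symm.hom (K₂.toFun (Γ.toFun x)) =
      F.map (homOfLE (((Γ₁.le_apply x).trans hy).trans (K₁.le_apply _))) := by
    rw [I.symm.hom_nat, ← Category.assoc, I.hom_symm_hom, map_map]
  calc _ = (I.hom x ≫ (J.hom (Γ₁.toFun x) ≫ H.map (homOfLE (hΓ x)) ≫
          J.symm.hom (Γ.toFun x)) ≫ I.symm.hom (K₂.toFun (Γ.toFun x))) ≫
            F.map (homOfLE (hK (Γ.toFun x))) := by simp only [transHom, Category.assoc]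
    _ = _ := by rw [inner, outer, map_map]

/-- Interleavings compose, up to enlarging the composite translations. -/
def trans (I : Interleaving Γ₁ K₁ F G) (J : Interleaving Γ₂ K₂ G H)
    (hΓ : ∀ x, Γ₂.toFun (Γ₁.toFun x) ≤ Γ.toFun x)
    (hK : ∀ x, K₁.toFun (K₂.toFun x) ≤ K.toFun x) : Interleaving Γ K F H where
  φ := ⟨transHom I J hΓ, fun _ _ f => transHom_nat I J hΓ (leOfHom f)⟩
  ψ := ⟨transHom J.symm I.symm hK, fun _ _ f => transHom_nat J.symm I.symm hK (leOfHom f)⟩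
  tri₁ := transHom_tri I J hΓ hK
  tri₂ := transHom_tri J.symm I.symm hK hΓ

end Interleaving

lemma dSuper_le {Ω : ℝ≥0 → Translation P} {F G : P ⥤ D} {ε : ℝ≥0}
    (I : Interleaving (Ω ε) (Ω ε) F G) : dSuper Ω F G ≤ ε :=
  sInf_le ⟨ε, ⟨I⟩, rfl⟩

lemma dSuper_symm_le (Ω : ℝ≥0 → Translation P) (F G : P ⥤ D) :
    dSuper Ω F G ≤ dSuper Ω G F := by
  refine le_sInf ?_
  rintro _ ⟨ε, ⟨I⟩, rfl⟩
  exact dSuper_le I.symm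

/-- The interleaving distance of a superlinear family is an extended
pseudometric on `P ⥤ D`. -/
theorem dSuper_pseudometric {P : Type*} [Preorder P] {D : Type u₁} [Category.{v₁} D]
    (Ω : ℝ≥0 → Translation P)
    (hΩ : ∀ (ε₁ ε₂ : ℝ≥0) (x : P),
      (Ω ε₁).toFun ((Ω ε₂).toFun x) ≤ (Ω (ε₁ + ε₂)).toFun x)
    (F G H : P ⥤ D) :
    dSuper Ω F F = 0 ∧ dSuper Ω F G = dSuper Ω G F ∧
      dSuper Ω F H ≤ dSuper Ω F G + dSuper Ω G H := by
  refine ⟨?_, (dSuper_symm_le Ω F G).antisymm (dSuper_symm_le Ω G F), ?_⟩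
  · simpa using dSuper_le (Interleaving.refl (Ω 0) F)
  · conv_rhs => rw [dSuper, dSuper, sInf_eq_iInf', sInf_eq_iInf']
    refine ENNReal.le_iInf_add_iInf ?_
    rintro ⟨_, ε, ⟨I⟩, rfl⟩ ⟨_, δ, ⟨J⟩, rfl⟩
    -- `F → H` applies `Ω ε` first and `H → F` applies `Ω δ` first.
    have K : Interleaving (Ω (ε + δ)) (Ω (ε + δ)) F H :=
      I.trans J (fun x => add_comm δ ε ▸ hΩ δ ε x) (hΩ ε δ)
    simpa using dSuper_le K
end

section
/- Soft stability for superlinear families: let P be a preordered set equipped with a superlinear family (Ω_ε), let F, G : P ⥤ D be functors into a category D, and let H : D ⥤ E be a functor into a category E. Then d^Ω(F ⋙ H, G ⋙ H) ≤ d^Ω(F, G). -/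
open CategoryTheory
open scoped NNReal ENNReal

universe v₁ u₁ v₂ u₂

variable {P : Type*} [Preorder P] {D : Type u₁} [Category.{v₁} D]

/-- Whiskering both legs of an interleaving with `H` gives an interleaving with the same
translations: the triangle identities are the images under `H` of the original ones. -/
def Interleaving.whiskerRight {P : Type*} [Preorder P] {D : Type u₁} [Category.{v₁} D]
    {E : Type u₂} [Category.{v₂} E] {Γ K : Translation P} {F G : P ⥤ D}
    (I : Interleaving Γ K F G) (H : D ⥤ E) : Interleaving Γ K (F ⋙ H) (G ⋙ H) where
  φ := Functor.whiskerRight I.φ H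
  ψ := Functor.whiskerRight I.ψ H
  tri₁ x := (H.map_comp _ _).symm.trans (congrArg H.map (I.tri₁ x))
  tri₂ x := (H.map_comp _ _).symm.trans (congrArg H.map (I.tri₂ x))

/-- soft stability for superlinear families. Post-composition with a
functor `H : D ⥤ E` is 1-Lipschitz for the interleaving distance of a superlinear family. -/
theorem dSuper_comp_le {P : Type*} [Preorder P] {D : Type u₁} [Category.{v₁} D]
    {E : Type u₂} [Category.{v₂} E]
    (Ω : ℝ≥0 → Translation P)
    (hΩ : ∀ (ε₁ ε₂ : ℝ≥0) (x : P),
      (Ω ε₁).toFun ((Ω ε₂).toFun x) ≤ (Ω (ε₁ + ε₂)).toFun x)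
    (F G : P ⥤ D) (H : D ⥤ E) :
    dSuper Ω (F ⋙ H) (G ⋙ H) ≤ dSuper Ω F G := by
  -- Every `ε` admissible for `F`, `G` is admissible for `F ⋙ H`, `G ⋙ H`.
  exact sInf_le_sInf (Set.image_mono fun _ ⟨I⟩ => ⟨I.whiskerRight H⟩)
end

section
/- Adjunction relation and metric equality: let P be a preordered set, let ω : Trans_P → [0,∞] and Ω : [0,∞) → Trans_P be arbitrary functions satisfying the adjunction relation: for all ε ∈ [0,∞) and all translations Γ, ω(Γ) ≤ ε if and only if Γ ≤ Ω_ε. Then ω is a sublinear projection if and only if Ω is a superlinear family; and if both hold, then for any category D and any functors F, G : P ⥤ D the interleaving distances agree: d^ω(F,G) = d^Ω(F,G). -/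
/-!
By the adjunction relation, `ω Γ ≤ ε` says exactly that `Γ` is dominated by `Ω ε`; in particular
`ω (Ω ε) ≤ ε`, and `ω id = 0` holds automatically because every translation dominates the
identity. Sublinearity of `ω` applied to `Ω ε₁ ∘ Ω ε₂` is then superlinearity of `Ω`, and
conversely `Γ₁ ≤ Ω ε₁` and `Γ₂ ≤ Ω ε₂` give `Γ₁ ∘ Γ₂ ≤ Ω ε₁ ∘ Ω ε₂ ≤ Ω (ε₁ + ε₂)`.

The distances agree because the two sets of admissible `ε` are equal: a `(Γ, K)`-interleaving with
`Γ, K ≤ Ω ε` extends to an `(Ω ε, Ω ε)`-interleaving (`Interleaved.mono`), and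
`Ω ε` is itself a translation with `ω (Ω ε) ≤ ε`.
-/

open CategoryTheory
open scoped NNReal ENNReal

universe v₁ u₁ v₂ u₂

variable {P : Type*} [Preorder P] {D : Type u₁} [Category.{v₁} D]

/-- The interleaving distance associated to a sublinear projection `ω`. -/
noncomputable def dSub (ω : Translation P → ℝ≥0∞) (F G : P ⥤ D) : ℝ≥0∞ :=
  sInf ((fun ε : ℝ≥0 => (ε : ℝ≥0∞)) ''
    {ε : ℝ≥0 | ∃ Γ K : Translation P, ω Γ ≤ (ε : ℝ≥0∞) ∧ ω K ≤ (ε : ℝ≥0∞) ∧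
      Interleaved Γ K F G})


/-- The natural transformation between the endofunctors of two comparable translations. -/
def Translation.homOfLE {P : Type*} [Preorder P] {Γ Γ' : Translation P} (h : Γ ≤ Γ') :
    Γ.functor ⟶ Γ'.functor where
  app x := CategoryTheory.homOfLE (h x)

/-- Pasting a commuting triangle `p ≫ s = u` with a commuting square `q ≫ r = s ≫ t`. Stating it
for arbitrary objects lets it be applied up to definitional unfolding of functor composition. -/
theorem paste_triangle {C : Type u₁} [Category.{v₁} C] {A B B' E E' Z : C}
    {p : A ⟶ B} {q : B ⟶ B'} {r : B' ⟶ E'} {s : B ⟶ E} {t : E ⟶ E'} {w : E' ⟶ Z}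
    {u : A ⟶ E} {v : A ⟶ Z} (square : q ≫ r = s ≫ t) (triangle : p ≫ s = u)
    (h : u ≫ t ≫ w = v) : (p ≫ q) ≫ r ≫ w = v := by
  rw [Category.assoc, reassoc_of% square, reassoc_of% triangle, h]

/-- Interleavings can be enlarged: postcompose both families of maps with the structure maps of
the modules. -/
theorem Interleaved.mono {P : Type*} [Preorder P] {D : Type u₁} [Category.{v₁} D]
    {Γ K Γ' K' : Translation P} {F G : P ⥤ D} (hΓ : Γ ≤ Γ') (hK : K ≤ K')
    (h : Interleaved Γ K F G) : Interleaved Γ' K' F G := by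
  obtain ⟨φ, ψ, tri₁, tri₂⟩ := h
  refine ⟨φ ≫ Functor.whiskerRight (Translation.homOfLE hΓ) G,
    ψ ≫ Functor.whiskerRight (Translation.homOfLE hK) F, fun x => ?_, fun x => ?_⟩
  · -- Naturality of `ψ` along `Γ x ≤ Γ' x` exposes the first triangle of the old interleaving.
    refine paste_triangle (ψ.naturality (CategoryTheory.homOfLE (hΓ x))) (tri₁ x) ?_
    exact (congrArg _ (F.map_comp _ _).symm).trans (F.map_comp _ _).symm
  · refine paste_triangle (φ.naturality (CategoryTheory.homOfLE (hK x))) (tri₂ x) ?_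
    exact (congrArg _ (G.map_comp _ _).symm).trans (G.map_comp _ _).symm

/-- Under the adjunction relation `ω(Γ) ≤ ε ↔ Γ ≤ Ω_ε`, the map `ω` is a
sublinear projection iff `Ω` is a superlinear family, and in that case the two interleaving
distances agree. -/
theorem adjunction_relation_dist_eq {P : Type*} [Preorder P]
    (ω : Translation P → ℝ≥0∞) (Ω : ℝ≥0 → Translation P)
    (adj : ∀ (ε : ℝ≥0) (Γ : Translation P), ω Γ ≤ (ε : ℝ≥0∞) ↔ Γ ≤ Ω ε) :
    ((ω (Translation.id P) = 0 ∧
        ∀ Γ₁ Γ₂ : Translation P, ω (Γ₁.comp Γ₂) ≤ ω Γ₁ + ω Γ₂) ↔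
      (∀ (ε₁ ε₂ : ℝ≥0) (x : P),
        (Ω ε₁).toFun ((Ω ε₂).toFun x) ≤ (Ω (ε₁ + ε₂)).toFun x)) ∧
    ((ω (Translation.id P) = 0 ∧
        ∀ Γ₁ Γ₂ : Translation P, ω (Γ₁.comp Γ₂) ≤ ω Γ₁ + ω Γ₂) →
      (∀ (ε₁ ε₂ : ℝ≥0) (x : P),
        (Ω ε₁).toFun ((Ω ε₂).toFun x) ≤ (Ω (ε₁ + ε₂)).toFun x) →
      ∀ (D : Type u₁) [Category.{v₁} D] (F G : P ⥤ D),
        dSub ω F G = dSuper Ω F G) := by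
  have hΩ : ∀ ε, ω (Ω ε) ≤ (ε : ℝ≥0∞) := fun ε => (adj ε _).2 (le_refl _)
  refine ⟨⟨fun ⟨_, hsub⟩ ε₁ ε₂ => ?_, fun hsup => ⟨?_, fun Γ₁ Γ₂ => ?_⟩⟩,
    fun _ _ D _ F G => ?_⟩
  · refine (adj (ε₁ + ε₂) ((Ω ε₁).comp (Ω ε₂))).1 ?_
    rw [ENNReal.coe_add]
    exact (hsub _ _).trans (add_le_add (hΩ ε₁) (hΩ ε₂))
  · exact le_antisymm ((adj 0 _).2 (Ω 0).le_apply) (zero_le)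
  · -- The adjunction only speaks about finite bounds, so infinite values are set apart.
    rcases eq_or_ne (ω Γ₁) ⊤ with h₁ | h₁
    · simp [h₁]
    rcases eq_or_ne (ω Γ₂) ⊤ with h₂ | h₂
    · simp [h₂]
    lift ω Γ₁ to ℝ≥0 using h₁ with ε₁ e₁
    lift ω Γ₂ to ℝ≥0 using h₂ with ε₂ e₂
    rw [← ENNReal.coe_add, adj]
    intro x
    exact ((adj ε₁ Γ₁).1 e₁.ge _).trans
      (((Ω ε₁).mono ((adj ε₂ Γ₂).1 e₂.ge x)).trans (hsup ε₁ ε₂ x))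
  · unfold dSub dSuper
    congr 2
    ext ε
    exact ⟨fun ⟨Γ, K, h₁, h₂, h⟩ => h.mono ((adj ε Γ).1 h₁) ((adj ε K).1 h₂),
      fun h => ⟨Ω ε, Ω ε, hΩ ε, hΩ ε, h⟩⟩
end
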